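/- If G has coclass r = 2 (so e = 3 and n = m+1, m ≥ 4) and defect k = 0, then the commutator subgroup G' of G is isomorphic to the direct sum G' ≅ ℤ[X,Y]/𝔄(G) ≅ A(3, m−2) ⊕ C(3) of the nearly homocyclic abelian 3-group of order 3^{m−2} with the cyclic group of order 3; in particular G' is of 3-rank exactly three. -/

import Mathlib

/-!
The commutator subgroup `G'` is generated by the three elements `s₂ = [y,x]`, `s₃` and `t₃`:
the subgroup they generate is normal, because `[s₃,y] = [t₃,x] = 1` by hypothesis,
`s₄ = s₂⁻³ s₃⁻³`, and `t₄ = 1` is forced by comparing the relations `s₂³ s₃³ s₄ = 1` and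
`s₂³ (s₃ t₃)³ s₄ t₄ = 1`, given `t₃³ = τ₅⁻¹ = 1`; modulo it the generators `x, y` commute.

The orders of the three generators are bounded using `s₂³ = σ₄`, `s₃³ = σ₅` and the relation
`σ_j³ σ_{j+1}³ σ_{j+2} = 1`, which together with `σ_j = 1` for `j ≥ m` shows that `σ_j` has exponent
`3^i` whenever `m ≤ j + 2i`. Hence `G'` is a quotient of
`ℤ/3^((m-1)/2) × ℤ/3^((m-2)/2) × ℤ/3`, a group of order `3^(m-1) = |G'|`
(`nonempty_addEquiv_of_generators`). Equality of the cardinalities makes the quotient map an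
isomorphism. The kernel of `Ψ` being `A`, the quotient by `A` is the image of `Ψ`, a subgroup of `G'`
containing the three generators, hence all of `G'`.
-/

open MvPolynomial

/-- The paper's commutator `[a,b] = a⁻¹ b⁻¹ a b`. -/
def pcomm {G : Type*} [Group G] (a b : G) : G := a⁻¹ * b⁻¹ * a * b

/-- The iterated commutator `s₂^{(x-1)^i (y-1)^j}`, where `s₂ = [y,x]`,
obtained by commutating `i` times with `x` and `j` times with `y`. -/
def wIter {G : Type*} [Group G] (x y : G) (i j : ℕ) : G :=
  (fun t => pcomm t x)^[i] ((fun t => pcomm t y)^[j] (pcomm y x))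

/-- The higher commutators `s₂ = [y,x]`, `s_j = [s_{j-1}, x]` for `j ≥ 3`. -/
def sSeq {G : Type*} [Group G] (x y : G) (j : ℕ) : G :=
  (fun t => pcomm t x)^[j - 2] (pcomm y x)

/-- The higher commutators `t₂ = [y,x]`, `t_j = [t_{j-1}, y]` for `j ≥ 3`. -/
def tSeq {G : Type*} [Group G] (x y : G) (j : ℕ) : G :=
  (fun t => pcomm t y)^[j - 2] (pcomm y x)

/-- `σ₃ = y³`, `σ_j = [σ_{j-1}, x]` for `j ≥ 4`. -/
def sigSeq {G : Type*} [Group G] (x y : G) (j : ℕ) : G :=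
  (fun t => pcomm t x)^[j - 3] (y ^ 3)

/-- `τ₃ = x³`, `τ_j = [τ_{j-1}, y]` for `j ≥ 4`. -/
def tauSeq {G : Type*} [Group G] (x y : G) (j : ℕ) : G :=
  (fun t => pcomm t y)^[j - 3] (x ^ 3)

/-- The nearly homocyclic abelian `p`-group `A(p,μ)` of order `p^μ`: writing
`μ = q(p-1) + r` with `0 ≤ r < p-1`, it has `r` cyclic factors of order `p^{q+1}` and
`p-1-r` factors of order `p^q` (trivial factors `ZMod 1` being allowed). -/
abbrev NearlyHomocyclic (p μ : ℕ) : Type :=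
  (i : Fin (p - 1)) → ZMod (p ^ ((μ + p - 2 - (i : ℕ)) / (p - 1)))

/-! ### Orders from the recursion of the `σ_j` -/

/-- Along the recursion `f j ^ 3 * f (j + 1) ^ 3 * f (j + 2) = 1`, the exponent of `f j` gains a
factor `3` each time `j` drops by two. The parameter `d` drives the descending induction on `j`. -/
lemma pow_eq_one_of_recursion {G : Type*} [Group G] (m : ℕ) (f : ℕ → G)
    (hcomm : ∀ i j, 4 ≤ i → 4 ≤ j → Commute (f i) (f j))
    (hrec : ∀ j, 4 ≤ j → f j ^ 3 * f (j + 1) ^ 3 * f (j + 2) = 1)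
    (hone : ∀ i, m ≤ i → f i = 1) (d : ℕ) :
    ∀ j i, 4 ≤ j → m ≤ j + d → m ≤ j + 2 * i → f j ^ 3 ^ i = 1 := by
  induction d using Nat.strong_induction_on with
  | _ d ih =>
    intro j i hj hd hi
    by_cases hjm : m ≤ j
    · rw [hone j hjm, one_pow]
    obtain ⟨i, rfl⟩ : ∃ i', i = i' + 1 := ⟨i - 1, by omega⟩
    have h1 : f (j + 1) ^ 3 ^ (i + 1) = 1 :=
      ih (d - 1) (by omega) (j + 1) (i + 1) (by omega) (by omega) (by omega)
    have h2 : f (j + 2) ^ 3 ^ i = 1 :=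
      ih (d - 1) (by omega) (j + 2) i (by omega) (by omega) (by omega)
    have h3 : f j ^ 3 = (f (j + 1) ^ 3 * f (j + 2))⁻¹ := by
      rw [eq_inv_iff_mul_eq_one, ← mul_assoc]
      exact hrec j hj
    rw [pow_succ', pow_mul, h3, inv_pow,
      ((hcomm (j + 1) (j + 2) (by omega) (by omega)).pow_left 3).mul_pow, ← pow_mul, ← pow_succ',
      h1, h2, mul_one, inv_one]

/-! ### Generators of the commutator subgroup -/

lemma pcomm_mem_commutator {G : Type*} [Group G] (a b : G) : pcomm a b ∈ commutator G := by
  have h := Subgroup.commutator_mem_commutator (Subgroup.mem_top a⁻¹) (Subgroup.mem_top b⁻¹)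
  rw [commutatorElement_def, inv_inv, inv_inv] at h
  exact h

/-- If a subgroup of a finite group `⟨x, y⟩` contains `[y,x]` and the commutators of its
generators with `x` and `y`, then it contains the commutator subgroup: it is normal, and `x, y`
commute modulo it. -/
lemma commutator_le_closure {G : Type*} [Group G] [Finite G] (x y : G)
    (hgen : Subgroup.closure ({x, y} : Set G) = ⊤) (S : Set G)
    (hyx : pcomm y x ∈ Subgroup.closure S)
    (hx : ∀ g ∈ S, pcomm g x ∈ Subgroup.closure S)
    (hy : ∀ g ∈ S, pcomm g y ∈ Subgroup.closure S) :
    commutator G ≤ Subgroup.closure S := by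
  set H := Subgroup.closure S with hH
  have key : ∀ z : G, (∀ g ∈ S, pcomm g z ∈ H) → z ∈ Subgroup.normalizer (H : Set G) := by
    intro z hz
    rw [← inv_mem_iff]
    apply Subgroup.mem_normalizer_fintype
    intro n hn
    have hle : H ≤ H.comap (MulAut.conj z⁻¹).toMonoidHom := by
      rw [hH, Subgroup.closure_le]
      intro g hg
      have h : g * pcomm g z ∈ H := mul_mem (Subgroup.subset_closure hg) (hz g hg)
      simpa [pcomm, mul_assoc] using h
    simpa using hle hn
  have hnorm : H.Normal := by
    rw [← Subgroup.normalizer_eq_top_iff, eq_top_iff, ← hgen, Subgroup.closure_le]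
    rintro z (rfl | rfl)
    · exact key _ hx
    · exact key _ hy
  have hxy : (QuotientGroup.mk' H y) * (QuotientGroup.mk' H x) =
      (QuotientGroup.mk' H x) * (QuotientGroup.mk' H y) := by
    rw [← map_mul, ← map_mul]
    symm
    apply (QuotientGroup.mk'_eq_mk' H).2
    exact ⟨pcomm y x, hyx, by simp [pcomm, mul_assoc]⟩
  apply Subgroup.Normal.quotient_commutative_iff_commutator_le.mp
  have htop : Subgroup.closure ({QuotientGroup.mk' H x, QuotientGroup.mk' H y} : Set (G ⧸ H)) = ⊤ := by
    rw [← Set.image_pair, ← MonoidHom.map_closure, hgen]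
    exact Subgroup.map_top_of_surjective _ (QuotientGroup.mk'_surjective H)
  have hc := Subgroup.isMulCommutative_closure
    (k := ({QuotientGroup.mk' H x, QuotientGroup.mk' H y} : Set (G ⧸ H))) (by
      rintro a (rfl | rfl) b (rfl | rfl)
      · rfl
      · exact hxy.symm
      · exact hxy
      · rfl)
  refine ⟨⟨fun a b => ?_⟩⟩
  have ha : a ∈ Subgroup.closure ({QuotientGroup.mk' H x, QuotientGroup.mk' H y} : Set (G ⧸ H)) :=
    htop ▸ Subgroup.mem_top a
  have hb : b ∈ Subgroup.closure ({QuotientGroup.mk' H x, QuotientGroup.mk' H y} : Set (G ⧸ H)) :=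
    htop ▸ Subgroup.mem_top b
  exact congrArg Subtype.val (hc.is_comm.comm ⟨a, ha⟩ ⟨b, hb⟩)

lemma wIter_mem_commutator {G : Type*} [Group G] (x y : G) (i j : ℕ) :
    wIter x y i j ∈ commutator G := by
  rcases i with _ | i
  · rcases j with _ | j
    · exact pcomm_mem_commutator y x
    · unfold wIter
      rw [Function.iterate_zero, id, Function.iterate_succ_apply']
      exact pcomm_mem_commutator _ _
  · unfold wIter
    rw [Function.iterate_succ_apply']
    exact pcomm_mem_commutator _ _

/-! ### The abelian group on three generators -/

/-- An abelian group generated by three elements whose orders divide `N 0`, `N 1` and `M` is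
a quotient of `ℤ/N 0 × ℤ/N 1 × ℤ/M`, and equals it when the cardinalities agree. -/
lemma nonempty_addEquiv_of_generators {C : Type*} [AddCommGroup C]
    (N : Fin 2 → ℕ) (M : ℕ) [∀ i, NeZero (N i)] [NeZero M] (u : Fin 2 → C) (w : C)
    (hu : ∀ i, N i • u i = 0) (hw : M • w = 0)
    (hgen : ∀ K : AddSubgroup C, u 0 ∈ K → u 1 ∈ K → w ∈ K → K = ⊤)
    (hcard : Nat.card C = N 0 * N 1 * M) :
    Nonempty (C ≃+ (((i : Fin 2) → ZMod (N i)) × ZMod M)) := by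
  let g : (i : Fin 2) → ZMod (N i) →+ C := fun i =>
    ZMod.lift (N i) ⟨zmultiplesHom C (u i), by simpa using hu i⟩
  let h : ZMod M →+ C := ZMod.lift M ⟨zmultiplesHom C w, by simpa using hw⟩
  have hg1 : ∀ i, g i 1 = u i := fun i => by
    have := ZMod.lift_coe (N i) ⟨zmultiplesHom C (u i), by simpa using hu i⟩ 1
    simpa [g] using this
  have hh1 : h 1 = w := by
    have := ZMod.lift_coe M ⟨zmultiplesHom C w, by simpa using hw⟩ 1
    simpa [h] using this
  let F : (((i : Fin 2) → ZMod (N i)) × ZMod M) →+ C :=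
    AddMonoidHom.coprod (∑ i, (g i).comp (Pi.evalAddMonoidHom (fun i => ZMod (N i)) i)) h
  have hF : ∀ p, F p = g 0 (p.1 0) + g 1 (p.1 1) + h p.2 := fun p => by
    simp [F, Fin.sum_univ_two]
  have hsurj : Function.Surjective F := by
    rw [← AddMonoidHom.range_eq_top]
    apply hgen
    · exact ⟨(Pi.single 0 1, 0), by simp [hF, hg1]⟩
    · exact ⟨(Pi.single 1 1, 0), by simp [hF, hg1]⟩
    · exact ⟨(0, 1), by simp [hF, hh1]⟩
  have hbij : Function.Bijective F := by
    rw [Nat.bijective_iff_surjective_and_card]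
    refine ⟨hsurj, ?_⟩
    rw [hcard, Nat.card_prod, Nat.card_pi, Fin.prod_univ_two]
    simp
  exact ⟨(AddEquiv.ofBijective F hbij).symm⟩

lemma card_three_torsion_zmod (a : ℕ) (ha : 1 ≤ a) :
    Nat.card {z : ZMod (3 ^ a) // 3 • z = 0} = 3 := by
  have h := IsAddCyclic.card_nsmulAddMonoidHom_ker (G := ZMod (3 ^ a)) 3
  rw [Nat.card_zmod, Nat.gcd_eq_right (dvd_pow_self 3 (by omega))] at h
  exact h

lemma card_three_torsion (m : ℕ) (hm : 4 ≤ m) :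
    Nat.card {z : NearlyHomocyclic 3 (m - 2) × ZMod 3 // 3 • z = 0} = 27 := by
  have e : {z : NearlyHomocyclic 3 (m - 2) × ZMod 3 // 3 • z = 0} ≃
      ((i : Fin 2) → {z : ZMod (3 ^ ((m - 2 + 3 - 2 - (i : ℕ)) / (3 - 1))) // 3 • z = 0}) ×
        {z : ZMod (3 ^ 1) // 3 • z = 0} :=
    { toFun := fun z => (fun i => ⟨z.1.1 i, congrFun (congrArg Prod.fst z.2) i⟩,
        ⟨z.1.2, congrArg Prod.snd z.2⟩)
      invFun := fun p => ⟨(fun i => (p.1 i).1, p.2.1),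
        Prod.ext (funext fun i => (p.1 i).2) p.2.2⟩
      left_inv := fun _ => rfl
      right_inv := fun _ => rfl }
  rw [Nat.card_congr e, Nat.card_prod, Nat.card_pi, Fin.prod_univ_two,
    card_three_torsion_zmod _ (by simp; omega), card_three_torsion_zmod _ (by simp; omega),
    card_three_torsion_zmod _ le_rfl]
  norm_num

/-! ### The Furtwängler map -/

lemma map_zsmul_of_map_add {P G : Type*} [AddCommGroup P] [Group G] (Ψ : P → G)
    (hadd : ∀ f g, Ψ (f + g) = Ψ f * Ψ g) (a : ℤ) (f : P) : Ψ (a • f) = Ψ f ^ a :=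
  map_zpow (MonoidHom.mk' (fun f : Multiplicative P => Ψ f.toAdd) fun _ _ => hadd _ _)
    (Multiplicative.ofAdd f) a

/-- An additive map `Ψ` on `ℤ[X,Y]` into a group takes values in any subgroup that contains the
images of all monomials. -/
lemma furtwangler_mem {G : Type*} [Group G] (K : Subgroup G)
    (Ψ : MvPolynomial (Fin 2) ℤ → G) (hadd : ∀ f g, Ψ (f + g) = Ψ f * Ψ g)
    (hmon : ∀ i j : ℕ, Ψ (X 0 ^ i * X 1 ^ j) ∈ K) (f : MvPolynomial (Fin 2) ℤ) : Ψ f ∈ K := by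
  induction f using MvPolynomial.induction_on' with
  | monomial u a =>
    have h1 : (monomial u a : MvPolynomial (Fin 2) ℤ) = a • (X 0 ^ u 0 * X 1 ^ u 1) := by
      rw [monomial_eq, Finsupp.prod_fintype _ _ (by simp), Fin.prod_univ_two, smul_eq_C_mul]
    rw [h1, map_zsmul_of_map_add Ψ hadd]
    exact zpow_mem (hmon _ _) a
  | add p q hp hq =>
    rw [hadd]
    exact mul_mem hp hq

lemma nonempty_quotient_addEquiv {P C : Type*} [CommRing P] [AddCommGroup C] (A : Ideal P)
    (φ : P →+ C) (hφ : Function.Surjective φ) (hA : ∀ f, f ∈ A ↔ φ f = 0) :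
    Nonempty ((P ⧸ A) ≃+ C) := by
  have hker : (Ideal.Quotient.mk A).toAddMonoidHom.ker = φ.ker := by
    ext f
    rw [AddMonoidHom.mem_ker, AddMonoidHom.mem_ker, ← hA]
    exact Ideal.Quotient.eq_zero_iff_mem
  exact ⟨(QuotientAddGroup.quotientKerEquivOfSurjective (Ideal.Quotient.mk A).toAddMonoidHom
    Ideal.Quotient.mk_surjective).symm.trans ((QuotientAddGroup.quotientAddEquivOfEq hker).trans
      (QuotientAddGroup.quotientKerEquivOfSurjective φ hφ))⟩

theorem commutator_subgroup_coclass_two_defect_zero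
    {G : Type*} [Group G] [Finite G]
    (m n e k : ℕ) (x y : G) (α β γ δ ρ : ℤ)
    (hm : 4 ≤ m) (hmn : m < n) (hn2m : n ≤ 2 * m - 3) (he : e = n - m + 2) (he3 : 3 ≤ e)
    (hk : k ≤ 1) (hkrho : k = 0 ↔ ρ = 0)
    (hα : α = -1 ∨ α = 0 ∨ α = 1) (hβ : β = -1 ∨ β = 0 ∨ β = 1)
    (hγ : γ = -1 ∨ γ = 0 ∨ γ = 1) (hδ : δ = -1 ∨ δ = 0 ∨ δ = 1)
    (hρ : ρ = -1 ∨ ρ = 0 ∨ ρ = 1)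
    (hcard : Nat.card G = 3 ^ n)
    (hab : Nat.card (G ⧸ commutator G) = 9)
    (habel : ∀ a ∈ commutator G, ∀ b ∈ commutator G, a * b = b * a)
    (hgen : Subgroup.closure ({x, y} : Set G) = ⊤)
    (hR1s : ∀ i, 3 ≤ i → sSeq x y i ^ 3 * sSeq x y (i + 1) ^ 3 * sSeq x y (i + 2) = 1)
    (hR1t : ∀ i, 3 ≤ i → tSeq x y i ^ 3 * tSeq x y (i + 1) ^ 3 * tSeq x y (i + 2) = 1)
    (hR2sig : ∀ j, 3 ≤ j → sigSeq x y j ^ 3 * sigSeq x y (j + 1) ^ 3 * sigSeq x y (j + 2) = 1)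
    (hR2tau : ∀ j, 3 ≤ j → tauSeq x y j ^ 3 * tauSeq x y (j + 1) ^ 3 * tauSeq x y (j + 2) = 1)
    (hR3s : sSeq x y 2 ^ 3 * sSeq x y 3 ^ 3 * sSeq x y 4 = (tauSeq x y 4)⁻¹)
    (hR3t : tSeq x y 2 ^ 3 * tSeq x y 3 ^ 3 * tSeq x y 4 = sigSeq x y 4)
    (hR4sig : ∀ j, 3 ≤ j → pcomm (sigSeq x y j) y = 1)
    (hR4tau : ∀ j, 3 ≤ j → pcomm (tauSeq x y j) x = 1)
    (hR5a : ∀ i, 3 ≤ i → i ≤ m - 1 → sigSeq x y i ≠ 1)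
    (hR5b : ∀ i, m ≤ i → sigSeq x y i = 1)
    (hR6a : ∀ j, 3 ≤ j → j ≤ e + k → tauSeq x y j ≠ 1)
    (hR6b : ∀ j, e + k + 1 ≤ j → tauSeq x y j = 1)
    (hR7sig : ∀ i, 5 ≤ i → sigSeq x y i = sSeq x y (i - 2) ^ 3)
    (hR7tau : ∀ i, 5 ≤ i → tauSeq x y i = tSeq x y (i - 2) ^ (-3 : ℤ))
    (hR8s : ∀ j, 5 ≤ j → sSeq x y j = (sigSeq x y j)⁻¹ * (sigSeq x y (j + 1))⁻¹)
    (hR8t : ∀ j, 5 ≤ j → tSeq x y j = tauSeq x y j * tauSeq x y (j + 1))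
    (hR9s : pcomm (sSeq x y 3) y = sigSeq x y (m - 1) ^ (-(ρ * δ)))
    (hR9t : pcomm (tSeq x y 3) x = sigSeq x y (m - 1) ^ (-(ρ * δ)))
    (hR10 : sSeq x y 2 ^ 3 * (sSeq x y 3 * tSeq x y 3) ^ 3 * sSeq x y 4 * tSeq x y 4 =
      sigSeq x y (m - 1) ^ (ρ * β))
    (hR11 : tauSeq x y (e + 1) = sigSeq x y (m - 1) ^ (-ρ))
    (hR12 : sSeq x y 4 * sigSeq x y 4 * sigSeq x y 5 = sigSeq x y (m - 1) ^ (ρ * β))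
    (hR13 : sSeq x y 3 * sigSeq x y 3 * sigSeq x y 4 =
      sigSeq x y (m - 2) ^ (ρ * β) * sigSeq x y (m - 1) ^ γ * tauSeq x y e ^ δ)
    (hR14 : (tSeq x y 3)⁻¹ * tauSeq x y 3 * tauSeq x y 4 =
      sigSeq x y (m - 2) ^ (ρ * δ) * sigSeq x y (m - 1) ^ α * tauSeq x y e ^ β)
    (hk0 : k = 0) (hrho0 : ρ = 0) (hee : e = 3) (hnm : n = m + 1)
    (Ψ : MvPolynomial (Fin 2) ℤ → G)
    (hΨadd : ∀ f g, Ψ (f + g) = Ψ f * Ψ g)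
    (hΨmon : ∀ i j : ℕ, Ψ (X 0 ^ i * X 1 ^ j) = wIter x y i j)
    (A : Ideal (MvPolynomial (Fin 2) ℤ))
    (hA : ∀ f, f ∈ A ↔ Ψ f = 1)
    :
    Nonempty ((MvPolynomial (Fin 2) ℤ ⧸ A) ≃+ (NearlyHomocyclic 3 (m - 2) × ZMod 3)) ∧
    Nonempty (Additive ↥(commutator G) ≃+ (NearlyHomocyclic 3 (m - 2) × ZMod 3)) ∧
    Nat.card {g : G // g ∈ commutator G ∧ g ^ 3 = 1} = 27 := by
  subst hk0 hrho0 hee hnm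
  let _ : CommGroup ↥(commutator G) :=
    { (inferInstance : Group ↥(commutator G)) with
      mul_comm := fun a b => Subtype.ext (habel a a.2 b b.2) }
  have e2 : sSeq x y 2 = pcomm y x := rfl
  have e2' : tSeq x y 2 = pcomm y x := rfl
  have e3 : sSeq x y 3 = pcomm (pcomm y x) x := rfl
  have e3' : tSeq x y 3 = pcomm (pcomm y x) y := rfl
  have e4 : sSeq x y 4 = pcomm (sSeq x y 3) x := rfl
  have e4' : tSeq x y 4 = pcomm (tSeq x y 3) y := rfl
  have hs2 : sSeq x y 2 ∈ commutator G := e2 ▸ pcomm_mem_commutator _ _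
  have hs3 : sSeq x y 3 ∈ commutator G := e3 ▸ pcomm_mem_commutator _ _
  have ht3 : tSeq x y 3 ∈ commutator G := e3' ▸ pcomm_mem_commutator _ _
  have hsig : ∀ j, 4 ≤ j → sigSeq x y j ∈ commutator G := by
    intro j hj
    obtain ⟨i, rfl⟩ : ∃ i, j = i + 4 := ⟨j - 4, by omega⟩
    unfold sigSeq
    rw [show i + 4 - 3 = i + 1 by omega, Function.iterate_succ_apply']
    exact pcomm_mem_commutator _ _
  -- `t₃³ = τ₅⁻¹ = 1`
  have ht3cube : tSeq x y 3 ^ 3 = 1 := by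
    have h := hR7tau 5 le_rfl
    rw [hR6b 5 (by omega)] at h
    simpa using h.symm
  have hs4 : sSeq x y 2 ^ 3 * sSeq x y 3 ^ 3 * sSeq x y 4 = 1 := by
    rw [hR3s, hR6b 4 (by omega), inv_one]
  have ht4 : tSeq x y 4 = 1 := by
    have hc : Commute (sSeq x y 3) (tSeq x y 3) := habel _ hs3 _ ht3
    have h := hR10
    rw [hc.mul_pow, ht3cube, mul_one, hs4, one_mul] at h
    simpa using h
  have hs2cube : sSeq x y 2 ^ 3 = sigSeq x y 4 := by
    rw [← hR3t, ht3cube, ht4, mul_one, mul_one, e2, e2']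
  have hs3cube : sSeq x y 3 ^ 3 = sigSeq x y 5 := (hR7sig 5 le_rfl).symm
  have hs3y : pcomm (sSeq x y 3) y = 1 := by simpa using hR9s
  have ht3x : pcomm (tSeq x y 3) x = 1 := by simpa using hR9t
  have hle : ∀ K : Subgroup G, sSeq x y 2 ∈ K → sSeq x y 3 ∈ K → tSeq x y 3 ∈ K →
      commutator G ≤ K := by
    intro K h2 h3 h3'
    let S : Set G := {sSeq x y 2, sSeq x y 3, tSeq x y 3}
    have m2 : sSeq x y 2 ∈ Subgroup.closure S := Subgroup.subset_closure (by simp [S])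
    have m3 : sSeq x y 3 ∈ Subgroup.closure S := Subgroup.subset_closure (by simp [S])
    have m3' : tSeq x y 3 ∈ Subgroup.closure S := Subgroup.subset_closure (by simp [S])
    have m4 : sSeq x y 4 ∈ Subgroup.closure S := by
      rw [← inv_mem_iff, ← eq_inv_of_mul_eq_one_left hs4]
      exact mul_mem (pow_mem m2 3) (pow_mem m3 3)
    have hS : commutator G ≤ Subgroup.closure S := by
      apply commutator_le_closure x y hgen S m2
      · rintro g (rfl | rfl | rfl)
        · exact m3
        · exact m4
        · rw [ht3x]; exact one_mem _
      · rintro g (rfl | rfl | rfl)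
        · exact m3'
        · rw [hs3y]; exact one_mem _
        · rw [← e4', ht4]; exact one_mem _
    refine hS.trans ((Subgroup.closure_le K).2 ?_)
    rintro g (rfl | rfl | rfl) <;> assumption
  have hpow := fun j i (hj : 4 ≤ j) (hi : m ≤ j + 2 * i) =>
    pow_eq_one_of_recursion m (sigSeq x y)
      (fun a b ha hb => habel _ (hsig a ha) _ (hsig b hb))
      (fun j hj => hR2sig j (by omega)) hR5b m j i hj (by omega) hi
  have hord2 : sSeq x y 2 ^ 3 ^ ((m - 1) / 2) = 1 := by
    rw [show (m - 1) / 2 = (m - 3) / 2 + 1 by omega, pow_succ', pow_mul, hs2cube]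
    exact hpow 4 _ le_rfl (by omega)
  have hord3 : sSeq x y 3 ^ 3 ^ ((m - 2) / 2) = 1 := by
    rw [show (m - 2) / 2 = (m - 4) / 2 + 1 by omega, pow_succ', pow_mul, hs3cube]
    exact hpow 5 _ (by omega) (by omega)
  have hcardC : Nat.card ↥(commutator G) = 3 ^ (m - 1) := by
    have h := Subgroup.card_eq_card_quotient_mul_card_subgroup (commutator G)
    rw [hcard, hab, show m + 1 = (m - 1) + 2 by omega, pow_add] at h
    omega
  obtain ⟨E⟩ : Nonempty (Additive ↥(commutator G) ≃+ (NearlyHomocyclic 3 (m - 2) × ZMod 3)) := by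
    refine nonempty_addEquiv_of_generators
      (fun i : Fin 2 => 3 ^ ((m - 2 + 3 - 2 - (i : ℕ)) / (3 - 1))) 3
      ![Additive.ofMul ⟨sSeq x y 2, hs2⟩, Additive.ofMul ⟨sSeq x y 3, hs3⟩]
      (Additive.ofMul ⟨tSeq x y 3, ht3⟩) ?_ ?_ ?_ ?_
    · intro i
      apply Additive.toMul.injective
      apply Subtype.ext
      fin_cases i
      · show sSeq x y 2 ^ 3 ^ ((m - 2 + 3 - 2 - 0) / (3 - 1)) = 1
        rwa [show (m - 2 + 3 - 2 - 0) / (3 - 1) = (m - 1) / 2 by omega]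
      · show sSeq x y 3 ^ 3 ^ ((m - 2 + 3 - 2 - 1) / (3 - 1)) = 1
        rwa [show (m - 2 + 3 - 2 - 1) / (3 - 1) = (m - 2) / 2 by omega]
    · apply Additive.toMul.injective
      apply Subtype.ext
      exact ht3cube
    · intro K h2 h3 h3'
      have h := hle ((AddSubgroup.toSubgroup' K).map (commutator G).subtype)
        ⟨_, h2, rfl⟩ ⟨_, h3, rfl⟩ ⟨_, h3', rfl⟩
      rw [eq_top_iff]
      intro c _
      obtain ⟨d, hd, hdc⟩ := h (Additive.toMul c).2
      have : d = Additive.toMul c := Subtype.ext hdc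
      rw [this] at hd
      exact hd
    · show Nat.card ↥(commutator G) = _
      rw [hcardC]
      show _ = 3 ^ ((m - 2 + 3 - 2 - 0) / (3 - 1)) * 3 ^ ((m - 2 + 3 - 2 - 1) / (3 - 1)) * 3
      rw [← pow_add, ← pow_succ]
      congr 1
      omega
  refine ⟨?_, ⟨E⟩, ?_⟩
  · have hmem := furtwangler_mem (commutator G) Ψ hΨadd
      (fun i j => hΨmon i j ▸ wIter_mem_commutator x y i j)
    let φ : MvPolynomial (Fin 2) ℤ →+ Additive ↥(commutator G) :=
      AddMonoidHom.mk' (fun f => Additive.ofMul ⟨Ψ f, hmem f⟩)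
        (fun f g => Additive.toMul.injective (Subtype.ext (hΨadd f g)))
    have hφ : Function.Surjective φ := by
      let ψ : Multiplicative (MvPolynomial (Fin 2) ℤ) →* G :=
        MonoidHom.mk' (fun f => Ψ f.toAdd) (fun f g => hΨadd _ _)
      have hr := hle ψ.range ⟨Multiplicative.ofAdd (X 0 ^ 0 * X 1 ^ 0), hΨmon 0 0⟩
        ⟨Multiplicative.ofAdd (X 0 ^ 1 * X 1 ^ 0), hΨmon 1 0⟩
        ⟨Multiplicative.ofAdd (X 0 ^ 0 * X 1 ^ 1), hΨmon 0 1⟩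
      intro c
      obtain ⟨f, hf⟩ := hr (Additive.toMul c).2
      exact ⟨f.toAdd, Additive.toMul.injective (Subtype.ext hf)⟩
    obtain ⟨E'⟩ := nonempty_quotient_addEquiv A φ hφ (fun f => by
      rw [hA]
      constructor
      · intro h
        exact Additive.toMul.injective (Subtype.ext h)
      · intro h
        exact congrArg (fun c => ((Additive.toMul c : ↥(commutator G)) : G)) h)
    exact ⟨E'.trans E⟩
  · rw [← card_three_torsion m hm]
    refine Nat.card_congr
      { toFun := fun g => ⟨E (Additive.ofMul ⟨g.1, g.2.1⟩), ?_⟩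
        invFun := fun z => ⟨((Additive.toMul (E.symm z.1) : ↥(commutator G)) : G),
          (Additive.toMul (E.symm z.1)).2, ?_⟩
        left_inv := fun g => ?_
        right_inv := fun z => ?_ }
    · rw [← map_nsmul, EmbeddingLike.map_eq_zero_iff]
      exact Additive.toMul.injective (Subtype.ext g.2.2)
    · have h : 3 • E.symm z.1 = 0 := by rw [← map_nsmul, z.2, map_zero]
      exact congrArg (fun c => ((Additive.toMul c : ↥(commutator G)) : G)) h
    · apply Subtype.ext
      simp
    · apply Subtype.ext
      simp
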